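/- (Simulation of Werner states) For all unit vectors a, b ∈ S², (1/(4π)²) ∫_{S²} ∫_{S²} sgn(a·(λ₀ + λ₁)) sgn(b·λ₀) dσ(λ₀) dσ(λ₁) = (a·b)/2. Consequently, the local hidden variable model in which Alice outputs A = -sgn(a·(λ₀+λ₁)) and Bob outputs B = sgn(b·λ₀), with λ₀, λ₁ independent uniform on S², has joint expectation E(AB) = -(a·b)/2, equal to that of the Werner state W = (1/2)|ψ⁻⟩⟨ψ⁻| + (1/2)·𝟙/4. -/

import Mathlib

open MeasureTheory Metric
open scoped RealInnerProductSpace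

/-- The unit sphere in ℝ³. -/
noncomputable abbrev Sphere2 := Metric.sphere (0 : EuclideanSpace ℝ (Fin 3)) 1

/-- The surface measure `σ` on the unit sphere of ℝ³ (total mass `4π`). -/
noncomputable def sphereMeasure : Measure Sphere2 :=
  (volume : Measure (EuclideanSpace ℝ (Fin 3))).toSphere

/-- `sgn(x) = 1` if `x ≥ 0`, `-1` if `x < 0`. -/
noncomputable def sgn (x : ℝ) : ℝ := if 0 ≤ x then 1 else -1

/-!
Write `λ₀ = x` and `λ₁ = l`. By Archimedes' hat-box theorem `⟪a, l⟫` is uniformly distributed on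
`[-1, 1]`, so `∫ sgn (⟪a, x⟫ + ⟪a, l⟫) dσ(l) = 2π ∫ u in -1..1, sgn (u + ⟪a, x⟫) = 4π ⟪a, x⟫`,
which turns the correlation into `4π ∫ ⟪a, x⟫ sgn ⟪b, x⟫ dσ(x)`. Reflecting `x` in the line `ℝ b`
fixes `⟪b, x⟫` and replaces `⟪a, x⟫` by `2 ⟪a, b⟫ ⟪b, x⟫ - ⟪a, x⟫`, so this integral equals
`⟪a, b⟫ ∫ |⟪b, x⟫| dσ(x) = 2π ⟪a, b⟫`.

For the hat-box theorem, a disc of squared radius `c` has area `π c`; slicing space by the planes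
`⟪a, x⟫ = z` shows that `(⟪a, x⟫, ‖x‖²)` pushes Lebesgue measure to `π` times Lebesgue measure on
`{(z, s) | z² < s}`. The law of `⟪a, l⟫` is then read off from cones `{x | ⟪a, x⟫ / ‖x‖ ∈ S}`.
-/

section SphereMeasure

open Set Module
open scoped Pointwise

variable {E F : Type*} [NormedAddCommGroup E] [NormedSpace ℝ E]
  [NormedAddCommGroup F] [NormedSpace ℝ F]

/-- The restriction of a linear isometry equivalence to the unit spheres. -/
def unitSphereHomeomorph (f : E ≃ₗᵢ[ℝ] F) : sphere (0 : E) 1 ≃ₜ sphere (0 : F) 1 :=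
  f.toHomeomorph.subtype fun x => by simp

lemma smul_image_preimage_unitSphereHomeomorph (f : E ≃ₗᵢ[ℝ] F) (R : Set ℝ)
    (s : Set (sphere (0 : F) 1)) :
    R • (Subtype.val '' (unitSphereHomeomorph f ⁻¹' s)) = f ⁻¹' (R • (Subtype.val '' s)) := by
  ext x
  constructor
  · rintro ⟨r, hr, _, ⟨l, hl, rfl⟩, rfl⟩
    exact ⟨r, hr, f l, ⟨_, hl, rfl⟩, (map_smul f r _).symm⟩
  · rintro ⟨r, hr, _, ⟨l, hl, rfl⟩, hx⟩
    refine ⟨r, hr, f.symm l, ⟨(unitSphereHomeomorph f).symm l, by simpa using hl, rfl⟩, ?_⟩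
    simpa using congrArg f.symm hx

variable [MeasurableSpace E] [BorelSpace E] [MeasurableSpace F] [BorelSpace F]

lemma measurePreserving_unitSphereHomeomorph {μ : Measure E} {ν : Measure F} (f : E ≃ₗᵢ[ℝ] F)
    (hf : MeasurePreserving f μ ν) :
    MeasurePreserving (unitSphereHomeomorph f) μ.toSphere ν.toSphere := by
  have hmeas : Measurable (unitSphereHomeomorph f) := (unitSphereHomeomorph f).measurable
  refine ⟨hmeas, Measure.ext fun s hs => ?_⟩
  rw [Measure.map_apply hmeas hs, μ.toSphere_apply' (hmeas hs), ν.toSphere_apply' hs,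
    smul_image_preimage_unitSphereHomeomorph,
    hf.measure_preimage_emb f.toHomeomorph.measurableEmbedding, f.toLinearEquiv.finrank_eq]

lemma toSphere_preimage_coe_of_cone (μ : Measure E) {T : Set E} (hT : MeasurableSet T)
    (hcone : ∀ r : ℝ, 0 < r → ∀ x, r • x ∈ T ↔ x ∈ T) :
    μ.toSphere (Subtype.val ⁻¹' T) = finrank ℝ E * μ (T ∩ (ball 0 1 \ {0})) := by
  have hball : Ioo (0 : ℝ) 1 • sphere (0 : E) 1 = ball 0 1 \ {0} := by
    rw [Ioo_smul_sphere_zero] <;> simp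
  rw [μ.toSphere_apply' (hT.preimage measurable_subtype_coe), Subtype.image_preimage_coe, ← hball]
  congr 2
  ext x
  constructor
  · rintro ⟨r, hr, x, ⟨hx, hxT⟩, rfl⟩
    exact ⟨(hcone r hr.1 x).2 hxT, r, hr, x, hx, rfl⟩
  · rintro ⟨hrx, r, hr, x, hx, rfl⟩
    exact ⟨r, hr, x, ⟨hx, (hcone r hr.1 x).1 hrx⟩, rfl⟩

end SphereMeasure

section Projection

open Module

variable {E : Type*} [NormedAddCommGroup E] [InnerProductSpace ℝ E]

lemma reflection_span_singleton_apply {b : E} (hb : ‖b‖ = 1) (x : E) :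
    (ℝ ∙ b).reflection x = (2 * ⟪b, x⟫) • b - x := by
  rw [Submodule.reflection_apply, Submodule.starProjection_unit_singleton ℝ hb, mul_smul,
    ofNat_smul_eq_nsmul ℝ 2]

variable [FiniteDimensional ℝ E] [MeasurableSpace E] [BorelSpace E]

lemma integrable_inner_mul_toSphere {μ : Measure E} (a : E) {g : sphere (0 : E) 1 → ℝ}
    (hg : Integrable g μ.toSphere) :
    Integrable (fun l : sphere (0 : E) 1 => ⟪a, l⟫ * g l) μ.toSphere := by
  refine hg.bdd_mul (c := ‖a‖) (by fun_prop) (.of_forall fun l => ?_)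
  simpa using norm_inner_le_norm (𝕜 := ℝ) a (l : E)

lemma integral_inner_mul_comp_inner_toSphere (a : E) {b : E} (hb : ‖b‖ = 1) {g : ℝ → ℝ}
    (hg : Integrable (fun l : sphere (0 : E) 1 => g ⟪b, l⟫) (volume : Measure E).toSphere) :
    ∫ l : sphere (0 : E) 1, ⟪a, l⟫ * g ⟪b, l⟫ ∂(volume : Measure E).toSphere =
      ⟪a, b⟫ * ∫ l : sphere (0 : E) 1, ⟪b, l⟫ * g ⟪b, l⟫ ∂(volume : Measure E).toSphere := by
  let ρ : E ≃ₗᵢ[ℝ] E := (ℝ ∙ b).reflection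
  have hreflect (l : sphere (0 : E) 1) : ⟪a, ρ l⟫ * g ⟪b, ρ l⟫ =
      2 * ⟪a, b⟫ * (⟪b, l⟫ * g ⟪b, l⟫) - ⟪a, l⟫ * g ⟪b, l⟫ := by
    have hfix : ⟪b, ρ l⟫ = ⟪b, l⟫ := by
      rw [reflection_span_singleton_apply hb, inner_sub_right, inner_smul_right,
        real_inner_self_eq_norm_sq, hb]
      ring
    rw [hfix, reflection_span_singleton_apply hb, inner_sub_right, inner_smul_right]
    ring
  have hinvariant : ∫ l : sphere (0 : E) 1, ⟪a, ρ l⟫ * g ⟪b, ρ l⟫ ∂(volume : Measure E).toSphere =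
      ∫ l : sphere (0 : E) 1, ⟪a, l⟫ * g ⟪b, l⟫ ∂(volume : Measure E).toSphere :=
    (measurePreserving_unitSphereHomeomorph ρ ρ.measurePreserving).integral_comp
      (unitSphereHomeomorph ρ).measurableEmbedding fun l => ⟪a, l⟫ * g ⟪b, l⟫
  simp_rw [hreflect] at hinvariant
  rw [integral_sub ((integrable_inner_mul_toSphere b hg).const_mul _)
    (integrable_inner_mul_toSphere a hg), integral_const_mul] at hinvariant
  linarith

end Projection

section Archimedes

open Set Module Real

section

variable {V : Type*} [NormedAddCommGroup V] [InnerProductSpace ℝ V] [FiniteDimensional ℝ V]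
  [MeasurableSpace V] [BorelSpace V]

lemma volume_setOf_norm_sq_le_of_finrank_eq_two (hV : finrank ℝ V = 2) (c : ℝ) :
    volume {w : V | ‖w‖ ^ 2 ≤ c} = ENNReal.ofReal π * ENNReal.ofReal c := by
  have : Nontrivial V := Module.nontrivial_of_finrank_pos (R := ℝ) (by lia)
  rcases lt_or_ge c 0 with hc | hc
  · have hempty : {w : V | ‖w‖ ^ 2 ≤ c} = ∅ :=
      eq_empty_of_forall_notMem fun w hw => (hc.trans_le (sq_nonneg ‖w‖)).not_ge hw
    rw [hempty, measure_empty, ENNReal.ofReal_of_nonpos hc.le, mul_zero]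
  · have hball : {w : V | ‖w‖ ^ 2 ≤ c} = closedBall 0 (√c) := by
      ext w
      rw [mem_closedBall_zero_iff, le_sqrt (norm_nonneg w) hc, mem_ofPred]
    rw [hball, Measure.addHaar_closedBall_eq_addHaar_ball,
      InnerProductSpace.volume_ball_of_dim_even (k := 1) (by simpa using hV), hV,
      ← ENNReal.ofReal_pow (sqrt_nonneg c), sq_sqrt hc, mul_comm]
    simp

lemma map_norm_sq_volume_of_finrank_eq_two (hV : finrank ℝ V = 2) :
    (volume : Measure V).map (fun w => ‖w‖ ^ 2) =
      ENNReal.ofReal π • volume.restrict (Ioi 0) := by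
  have hmeas : Measurable fun w : V => ‖w‖ ^ 2 := by fun_prop
  have hIic (c : ℝ) : (volume : Measure V).map (fun w => ‖w‖ ^ 2) (Iic c) =
      ENNReal.ofReal π * ENNReal.ofReal c := by
    rw [Measure.map_apply hmeas measurableSet_Iic]
    exact volume_setOf_norm_sq_le_of_finrank_eq_two hV c
  have hIoc (c d : ℝ) (hcd : c < d) : (volume : Measure V).map (fun w => ‖w‖ ^ 2) (Ioc c d) =
      ENNReal.ofReal π * (ENNReal.ofReal d - ENNReal.ofReal c) := by
    rw [← Iic_sdiff_Iic, measure_sdiff (Iic_subset_Iic.2 hcd.le) nullMeasurableSet_Iic, hIic, hIic,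
      ENNReal.mul_sub fun _ _ => ENNReal.ofReal_ne_top]
    rw [hIic]
    finiteness
  refine Measure.ext_of_Ioc' _ _ (fun c d hcd => ?_) fun c d hcd => ?_
  · rw [hIoc c d hcd]
    finiteness
  · rw [hIoc c d hcd, Measure.smul_apply, Measure.restrict_apply measurableSet_Ioc,
      Ioc_inter_Ioi, volume_Ioc, smul_eq_mul]
    congr 1
    rcases le_total c 0 with hc | hc
    · simp [hc, ENNReal.ofReal_of_nonpos hc]
    · simp [hc, ENNReal.ofReal_sub]

end

variable {E : Type*} [NormedAddCommGroup E] [InnerProductSpace ℝ E] [FiniteDimensional ℝ E]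
  [MeasurableSpace E] [BorelSpace E]

lemma exists_measurePreserving_inner_prod_orthogonal {a : E} (ha : ‖a‖ = 1) :
    ∃ φ : E → ℝ × (ℝ ∙ a)ᗮ, MeasurePreserving φ ∧
      ∀ x, (φ x).1 = ⟪a, x⟫ ∧ ⟪a, x⟫ ^ 2 + ‖(φ x).2‖ ^ 2 = ‖x‖ ^ 2 := by
  let ψ : E ≃ₗᵢ[ℝ] WithLp 2 (ℝ × (ℝ ∙ a)ᗮ) := (ℝ ∙ a).orthogonalDecomposition.trans
    (LinearIsometryEquiv.withLpProdCongr 2 (LinearIsometryEquiv.toSpanUnitSingleton a ha).symm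
      (LinearIsometryEquiv.refl ℝ _))
  have hfst (x : E) : (ψ x).fst = ⟪a, x⟫ := by
    change (LinearIsometryEquiv.toSpanUnitSingleton a ha).symm
      ((ℝ ∙ a).orthogonalDecomposition x).fst = ⟪a, x⟫
    rw [Submodule.fst_orthogonalDecomposition_apply, LinearIsometryEquiv.symm_apply_eq]
    exact Subtype.ext (Submodule.starProjection_unit_singleton ℝ ha x)
  refine ⟨fun x => (ψ x).ofLp, (WithLp.volume_preserving_ofLp ℝ _).comp ψ.measurePreserving,
    fun x => ⟨hfst x, ?_⟩⟩
  rw [← ψ.norm_map x, WithLp.prod_norm_sq_eq_of_L2, hfst, norm_eq_abs, sq_abs]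
  rfl

lemma map_inner_norm_sq_volume_of_finrank_eq_three (hE : finrank ℝ E = 3) {a : E}
    (ha : ‖a‖ = 1) :
    (volume : Measure E).map (fun x => (⟪a, x⟫, ‖x‖ ^ 2)) =
      ENNReal.ofReal π • volume.restrict {p : ℝ × ℝ | p.1 ^ 2 < p.2} := by
  have : Fact (finrank ℝ E = 2 + 1) := ⟨hE⟩
  have hV : finrank ℝ (ℝ ∙ a)ᗮ = 2 :=
    Submodule.finrank_orthogonal_span_singleton (norm_ne_zero_iff.1 (by simp [ha]))
  obtain ⟨φ, hφ, hφ_apply⟩ := exists_measurePreserving_inner_prod_orthogonal ha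
  have hP : MeasurableSet {p : ℝ × ℝ | p.1 ^ 2 < p.2} :=
    measurableSet_lt (by fun_prop) (by fun_prop)
  ext A hA
  have hslice (z : ℝ) : volume {w : (ℝ ∙ a)ᗮ | (z, z ^ 2 + ‖w‖ ^ 2) ∈ A} =
      ENNReal.ofReal π * volume (Prod.mk z ⁻¹' (A ∩ {p : ℝ × ℝ | p.1 ^ 2 < p.2})) := by
    have hAz : MeasurableSet {s : ℝ | (z, z ^ 2 + s) ∈ A} := hA.preimage (by fun_prop)
    calc volume {w : (ℝ ∙ a)ᗮ | (z, z ^ 2 + ‖w‖ ^ 2) ∈ A}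
        = (volume : Measure (ℝ ∙ a)ᗮ).map (fun w => ‖w‖ ^ 2) {s : ℝ | (z, z ^ 2 + s) ∈ A} :=
          (Measure.map_apply (by fun_prop) hAz).symm
      _ = ENNReal.ofReal π * volume ({s : ℝ | (z, z ^ 2 + s) ∈ A} ∩ Ioi 0) := by
          rw [map_norm_sq_volume_of_finrank_eq_two hV, Measure.smul_apply,
            Measure.restrict_apply hAz, smul_eq_mul]
      _ = ENNReal.ofReal π * volume (Prod.mk z ⁻¹' (A ∩ {p : ℝ × ℝ | p.1 ^ 2 < p.2})) := by
          rw [← measure_preimage_add volume (z ^ 2) (Prod.mk z ⁻¹' _)]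
          congr 2
          ext s
          simp
  calc (volume : Measure E).map (fun x => (⟪a, x⟫, ‖x‖ ^ 2)) A
      = volume (φ ⁻¹' {p | (p.1, p.1 ^ 2 + ‖p.2‖ ^ 2) ∈ A}) := by
        rw [Measure.map_apply (by fun_prop) hA]
        congr 1
        ext x
        rw [mem_preimage, mem_preimage, mem_ofPred, (hφ_apply x).1, (hφ_apply x).2]
    _ = volume {p : ℝ × (ℝ ∙ a)ᗮ | (p.1, p.1 ^ 2 + ‖p.2‖ ^ 2) ∈ A} :=
        hφ.measure_preimage (hA.preimage (by fun_prop)).nullMeasurableSet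
    _ = ∫⁻ z : ℝ, volume {w : (ℝ ∙ a)ᗮ | (z, z ^ 2 + ‖w‖ ^ 2) ∈ A} :=
        Measure.prod_apply (hA.preimage (by fun_prop))
    _ = ENNReal.ofReal π * volume (A ∩ {p : ℝ × ℝ | p.1 ^ 2 < p.2}) := by
        simp_rw [hslice]
        rw [lintegral_const_mul _ (measurable_measure_prodMk_left (hA.inter hP)),
          Measure.volume_eq_prod ℝ ℝ, Measure.prod_apply (hA.inter hP)]
    _ = (ENNReal.ofReal π • volume.restrict {p : ℝ × ℝ | p.1 ^ 2 < p.2}) A := by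
        rw [Measure.smul_apply, Measure.restrict_apply hA, smul_eq_mul]

lemma setLIntegral_sqrt_Ioo_zero_one :
    ∫⁻ s in Ioo (0 : ℝ) 1, ENNReal.ofReal √s = ENNReal.ofReal (2 / 3) := by
  rw [← ofReal_integral_eq_lintegral_ofReal, ← integral_Ioc_eq_integral_Ioo,
    ← intervalIntegral.integral_of_le zero_le_one]
  · simp_rw [sqrt_eq_rpow]
    rw [integral_rpow (by norm_num)]
    norm_num
  · exact (Continuous.integrableOn_Icc (by fun_prop)).mono_set Ioo_subset_Icc_self
  · exact .of_forall fun s => sqrt_nonneg s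

lemma volume_setOf_div_sqrt_mem {s : ℝ} (hs : 0 < s) (S : Set ℝ) :
    volume {z : ℝ | z / √s ∈ S ∧ z ^ 2 < s} =
      ENNReal.ofReal √s * volume (S ∩ Ioo (-1) 1) := by
  have hset : {z : ℝ | z / √s ∈ S ∧ z ^ 2 < s} = (fun z => z * (√s)⁻¹) ⁻¹' (S ∩ Ioo (-1) 1) := by
    ext z
    rw [mem_ofPred, mem_preimage, mem_inter_iff, ← div_eq_mul_inv, mem_Ioo, ← abs_lt, abs_div,
      abs_of_nonneg (sqrt_nonneg s), div_lt_one (sqrt_pos.2 hs), lt_sqrt (abs_nonneg z), sq_abs]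
  rw [hset, volume_preimage_mul_right (by positivity), inv_inv, abs_of_nonneg (sqrt_nonneg s)]

lemma volume_setOf_div_sqrt_mem_Ioo_inter_sq_lt {S : Set ℝ} (hS : MeasurableSet S) :
    volume ({p : ℝ × ℝ | p.1 / √p.2 ∈ S ∧ p.2 ∈ Ioo 0 1} ∩ {p | p.1 ^ 2 < p.2}) =
      ENNReal.ofReal (2 / 3) * volume (S ∩ Ioo (-1) 1) := by
  have hslice (s : ℝ) : volume ((fun z => (z, s)) ⁻¹'
      ({p : ℝ × ℝ | p.1 / √p.2 ∈ S ∧ p.2 ∈ Ioo 0 1} ∩ {p | p.1 ^ 2 < p.2})) =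
      (Ioo 0 1).indicator (fun s => ENNReal.ofReal √s * volume (S ∩ Ioo (-1) 1)) s := by
    by_cases hs : s ∈ Ioo (0 : ℝ) 1
    · rw [indicator_of_mem hs, ← volume_setOf_div_sqrt_mem hs.1]
      congr 1
      ext z
      simp only [mem_preimage, mem_inter_iff, mem_ofPred, hs, and_true]
    · rw [indicator_of_notMem hs]
      convert measure_empty (μ := volume)
      ext z
      simp only [mem_preimage, mem_inter_iff, mem_ofPred, hs, and_false, false_and,
        mem_empty_iff_false]
  have hmeas : MeasurableSet
      ({p : ℝ × ℝ | p.1 / √p.2 ∈ S ∧ p.2 ∈ Ioo 0 1} ∩ {p | p.1 ^ 2 < p.2}) :=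
    ((hS.preimage (by fun_prop)).inter (measurableSet_Ioo.preimage measurable_snd)).inter
      (measurableSet_lt (by fun_prop) (by fun_prop))
  rw [Measure.volume_eq_prod, Measure.prod_apply_symm hmeas]
  simp_rw [hslice]
  rw [lintegral_indicator measurableSet_Ioo, lintegral_mul_const _ (by fun_prop),
    setLIntegral_sqrt_Ioo_zero_one]

/-- **Archimedes' hat-box theorem** -/
theorem map_inner_toSphere_of_finrank_eq_three (hE : finrank ℝ E = 3) {a : E} (ha : ‖a‖ = 1) :
    (volume : Measure E).toSphere.map (fun l : sphere (0 : E) 1 => ⟪a, (l : E)⟫) =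
      ENNReal.ofReal (2 * π) • volume.restrict (Ioo (-1) 1) := by
  have hinner : Measurable fun l : sphere (0 : E) 1 => ⟪a, (l : E)⟫ := by fun_prop
  ext S hS
  let T : Set E := {x | ⟪a, x⟫ / ‖x‖ ∈ S}
  let A : Set (ℝ × ℝ) := {p | p.1 / √p.2 ∈ S ∧ p.2 ∈ Ioo 0 1}
  have hT : MeasurableSet T := hS.preimage (by fun_prop)
  have hA : MeasurableSet A :=
    (hS.preimage (by fun_prop)).inter (measurableSet_Ioo.preimage measurable_snd)
  have hcone (r : ℝ) (hr : 0 < r) (x : E) : r • x ∈ T ↔ x ∈ T := by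
    simp only [T, mem_ofPred, inner_smul_right, norm_smul, norm_of_nonneg hr.le,
      mul_div_mul_left _ _ hr.ne']
  have hTS : Subtype.val ⁻¹' T = (fun l : sphere (0 : E) 1 => ⟪a, (l : E)⟫) ⁻¹' S := by
    ext l
    simp [T]
  have hTA : T ∩ (ball 0 1 \ {0}) = (fun x => (⟪a, x⟫, ‖x‖ ^ 2)) ⁻¹' A := by
    ext x
    simp [T, A, and_comm, sq_pos_iff]
  have hconst : (3 : ℕ) * (ENNReal.ofReal π * ENNReal.ofReal (2 / 3)) =
      ENNReal.ofReal (2 * π) := by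
    rw [← ENNReal.ofReal_natCast, ← ENNReal.ofReal_mul pi_nonneg,
      ← ENNReal.ofReal_mul (Nat.cast_nonneg _)]
    ring_nf
  calc (volume : Measure E).toSphere.map (fun l : sphere (0 : E) 1 => ⟪a, (l : E)⟫) S
      = (3 : ℕ) * volume (T ∩ (ball 0 1 \ {0})) := by
        rw [Measure.map_apply hinner hS, ← hTS, toSphere_preimage_coe_of_cone _ hT hcone, hE]
    _ = (3 : ℕ) * (ENNReal.ofReal π * volume (A ∩ {p | p.1 ^ 2 < p.2})) := by
        rw [hTA, ← Measure.map_apply (by fun_prop) hA,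
          map_inner_norm_sq_volume_of_finrank_eq_three hE ha, Measure.smul_apply,
          Measure.restrict_apply hA, smul_eq_mul]
    _ = ENNReal.ofReal (2 * π) * volume (S ∩ Ioo (-1) 1) := by
        rw [volume_setOf_div_sqrt_mem_Ioo_inter_sq_lt hS, ← mul_assoc (ENNReal.ofReal π),
          ← mul_assoc, hconst]
    _ = (ENNReal.ofReal (2 * π) • volume.restrict (Ioo (-1) 1)) S := by
        rw [Measure.smul_apply, Measure.restrict_apply hS, smul_eq_mul]

lemma integral_comp_inner_toSphere_of_finrank_eq_three (hE : finrank ℝ E = 3) {a : E}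
    (ha : ‖a‖ = 1) {f : ℝ → ℝ} (hf : AEStronglyMeasurable f) :
    ∫ l : sphere (0 : E) 1, f ⟪a, l⟫ ∂(volume : Measure E).toSphere =
      2 * π * ∫ u in (-1)..1, f u := by
  have hinner : Measurable fun l : sphere (0 : E) 1 => ⟪a, (l : E)⟫ := by fun_prop
  have hmap := map_inner_toSphere_of_finrank_eq_three hE ha
  rw [← integral_map hinner.aemeasurable (hmap ▸ hf.restrict.smul_measure _), hmap,
    integral_smul_measure, ENNReal.toReal_ofReal (by positivity), smul_eq_mul,
    intervalIntegral.integral_of_le (by norm_num), integral_Ioc_eq_integral_Ioo]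

end Archimedes

section Sign

lemma sgn_of_nonneg {x : ℝ} (hx : 0 ≤ x) : sgn x = 1 := if_pos hx

lemma sgn_of_neg {x : ℝ} (hx : x < 0) : sgn x = -1 := if_neg hx.not_ge

lemma abs_sgn (x : ℝ) : |sgn x| = 1 := by
  rcases lt_or_ge x 0 with hx | hx
  · simp [sgn_of_neg hx]
  · simp [sgn_of_nonneg hx]

lemma mul_sgn_self (x : ℝ) : x * sgn x = |x| := by
  rcases lt_or_ge x 0 with hx | hx
  · rw [sgn_of_neg hx, abs_of_neg hx, mul_neg_one]
  · rw [sgn_of_nonneg hx, abs_of_nonneg hx, mul_one]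

@[fun_prop]
lemma measurable_sgn : Measurable sgn :=
  Measurable.ite measurableSet_Ici measurable_const measurable_const

lemma integrable_sgn_comp {α : Type*} [MeasurableSpace α] {μ : Measure α} [IsFiniteMeasure μ]
    {f : α → ℝ} (hf : Measurable f) : Integrable (fun x => sgn (f x)) μ :=
  .of_bound (measurable_sgn.comp hf).aestronglyMeasurable 1
    (.of_forall fun x => (abs_sgn (f x)).le)

lemma hasDerivAt_abs_sgn {x : ℝ} (hx : x ≠ 0) : HasDerivAt (|·|) (sgn x) x := by
  rcases hx.lt_or_gt with hx | hx
  · simpa only [sgn_of_neg hx] using hasDerivAt_abs_neg hx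
  · simpa only [sgn_of_nonneg hx.le] using hasDerivAt_abs_pos hx

lemma intervalIntegral_sgn (p q : ℝ) : ∫ u in p..q, sgn u = |q| - |p| :=
  integral_eq_of_hasDerivAt_off_countable (|·|) sgn (Set.countable_singleton 0)
    continuous_abs.continuousOn (fun _ hu => hasDerivAt_abs_sgn hu.2)
    ⟨integrable_sgn_comp measurable_id, integrable_sgn_comp measurable_id⟩

lemma intervalIntegral_sgn_add {x : ℝ} (hx : |x| ≤ 1) : ∫ u in (-1)..1, sgn (u + x) = 2 * x := by
  obtain ⟨hx₀, hx₁⟩ := abs_le.1 hx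
  rw [intervalIntegral.integral_comp_add_right, intervalIntegral_sgn, abs_of_nonneg (by linarith),
    abs_of_nonpos (by linarith)]
  ring

lemma intervalIntegral_abs_neg_one_one : ∫ u in (-1 : ℝ)..1, |u| = 1 := by
  have hneg : ∫ u in (-1 : ℝ)..0, |u| = ∫ u in (-1 : ℝ)..0, -u := by
    refine intervalIntegral.integral_congr fun u hu => abs_of_nonpos ?_
    rw [Set.uIcc_of_le (by norm_num)] at hu
    exact hu.2
  have hpos : ∫ u in (0 : ℝ)..1, |u| = ∫ u in (0 : ℝ)..1, u := by
    refine intervalIntegral.integral_congr fun u hu => abs_of_nonneg ?_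
    rw [Set.uIcc_of_le zero_le_one] at hu
    exact hu.1
  rw [← intervalIntegral.integral_add_adjacent_intervals (b := 0)
    (continuous_abs.intervalIntegrable _ _) (continuous_abs.intervalIntegrable _ _), hneg, hpos,
    intervalIntegral.integral_neg, integral_id, integral_id]
  norm_num

end Sign

section Correlation

open Module Real

variable {E : Type*} [NormedAddCommGroup E] [InnerProductSpace ℝ E] [FiniteDimensional ℝ E]
  [MeasurableSpace E] [BorelSpace E]

lemma integral_sgn_inner_add_toSphere (hE : finrank ℝ E = 3) {a : E} (ha : ‖a‖ = 1)
    {x : E} (hx : ‖x‖ = 1) :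
    ∫ l : sphere (0 : E) 1, sgn ⟪a, x + l⟫ ∂(volume : Measure E).toSphere =
      4 * π * ⟪a, x⟫ := by
  have hax : |⟪a, x⟫| ≤ 1 := by simpa [ha, hx] using abs_real_inner_le_norm a x
  simp_rw [inner_add_right, add_comm ⟪a, x⟫]
  rw [integral_comp_inner_toSphere_of_finrank_eq_three hE ha (f := fun u => sgn (u + ⟪a, x⟫))
    (Measurable.aestronglyMeasurable (by fun_prop)), intervalIntegral_sgn_add hax]
  ring

lemma integral_inner_mul_sgn_inner_toSphere (hE : finrank ℝ E = 3) (a : E) {b : E}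
    (hb : ‖b‖ = 1) :
    ∫ l : sphere (0 : E) 1, ⟪a, l⟫ * sgn ⟪b, l⟫ ∂(volume : Measure E).toSphere =
      2 * π * ⟪a, b⟫ := by
  rw [integral_inner_mul_comp_inner_toSphere a hb (integrable_sgn_comp (by fun_prop))]
  simp_rw [mul_sgn_self]
  rw [integral_comp_inner_toSphere_of_finrank_eq_three hE hb (f := fun u => |u|)
    continuous_abs.aestronglyMeasurable, intervalIntegral_abs_neg_one_one]
  ring

lemma integral_integral_sgn_inner_add_mul_sgn_inner_toSphere (hE : finrank ℝ E = 3) {a b : E}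
    (ha : ‖a‖ = 1) (hb : ‖b‖ = 1) :
    ∫ l₁ : sphere (0 : E) 1, (∫ l₀ : sphere (0 : E) 1,
      sgn ⟪a, (l₀ : E) + (l₁ : E)⟫ * sgn ⟪b, (l₀ : E)⟫ ∂(volume : Measure E).toSphere)
        ∂(volume : Measure E).toSphere = 8 * π ^ 2 * ⟪a, b⟫ := by
  have hint : Integrable (fun p : sphere (0 : E) 1 × sphere (0 : E) 1 =>
      sgn ⟪a, (p.2 : E) + (p.1 : E)⟫ * sgn ⟪b, (p.2 : E)⟫)
      ((volume : Measure E).toSphere.prod (volume : Measure E).toSphere) :=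
    (integrable_sgn_comp (by fun_prop)).mul_bdd (c := 1)
      (Measurable.aestronglyMeasurable (by fun_prop)) (.of_forall fun _ => (abs_sgn _).le)
  rw [integral_integral_swap hint]
  simp_rw [integral_mul_const, integral_sgn_inner_add_toSphere hE ha (norm_eq_of_mem_sphere _),
    mul_assoc (4 * π)]
  rw [integral_const_mul, integral_inner_mul_sgn_inner_toSphere hE a hb]
  ring

theorem werner_state_simulation_general (hE : finrank ℝ E = 3) {a b : E}
    (ha : ‖a‖ = 1) (hb : ‖b‖ = 1) :
    (1 / (4 * π)) ^ 2 *
      ∫ l₁ : sphere (0 : E) 1, (∫ l₀ : sphere (0 : E) 1,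
        sgn ⟪a, (l₀ : E) + (l₁ : E)⟫ * sgn ⟪b, (l₀ : E)⟫ ∂(volume : Measure E).toSphere)
          ∂(volume : Measure E).toSphere
      = ⟪a, b⟫ / 2 ∧
    (1 / (4 * π)) ^ 2 *
      ∫ l₁ : sphere (0 : E) 1, (∫ l₀ : sphere (0 : E) 1,
        (-sgn ⟪a, (l₀ : E) + (l₁ : E)⟫) * sgn ⟪b, (l₀ : E)⟫ ∂(volume : Measure E).toSphere)
          ∂(volume : Measure E).toSphere
      = -(⟪a, b⟫ / 2) := by
  simp_rw [neg_mul, integral_neg, mul_neg, neg_inj, and_self]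
  rw [integral_integral_sgn_inner_add_mul_sgn_inner_toSphere hE ha hb]
  field

end Correlation

/-- **Simulation of Werner states.** For unit vectors `a, b`,
`(1/(4π))² ∫∫_{S²×S²} sgn(a·(λ₀+λ₁)) sgn(b·λ₀) dσ(λ₀) dσ(λ₁) = (a·b)/2`.
Consequently the LHV model `A = -sgn(a·(λ₀+λ₁))`, `B = sgn(b·λ₀)` with `λ₀, λ₁`
independent uniform on `S²` has joint expectation `E(AB) = -(a·b)/2`, equal to that
of the Werner state `W = (1/2)|ψ⁻⟩⟨ψ⁻| + (1/2)·𝟙/4`. -/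
theorem werner_state_simulation (a b : EuclideanSpace ℝ (Fin 3))
    (ha : ‖a‖ = 1) (hb : ‖b‖ = 1) :
    (1 / (4 * Real.pi)) ^ 2 *
      ∫ l₁ : Sphere2, (∫ l₀ : Sphere2,
        sgn ⟪a, (l₀ : EuclideanSpace ℝ (Fin 3)) + (l₁ : EuclideanSpace ℝ (Fin 3))⟫ *
          sgn ⟪b, (l₀ : EuclideanSpace ℝ (Fin 3))⟫ ∂sphereMeasure) ∂sphereMeasure
      = ⟪a, b⟫ / 2 ∧
    (1 / (4 * Real.pi)) ^ 2 *
      ∫ l₁ : Sphere2, (∫ l₀ : Sphere2,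
        (-sgn ⟪a, (l₀ : EuclideanSpace ℝ (Fin 3)) + (l₁ : EuclideanSpace ℝ (Fin 3))⟫) *
          sgn ⟪b, (l₀ : EuclideanSpace ℝ (Fin 3))⟫ ∂sphereMeasure) ∂sphereMeasure
      = -(⟪a, b⟫ / 2) := by
  exact werner_state_simulation_general finrank_euclideanSpace_fin ha hb
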